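/- arXiv:1212.0740 — 2 statements merged into one kernel-verified Lean document; each statement's English description precedes it below -/
import Mathlib

section
/- For every a ∈ k, the stabilizer in G of the element e_{-1} + a·e_{p-2} of the Witt algebra W is trivial: if σ is a Lie algebra automorphism of W with σ(e_{-1} + a·e_{p-2}) = e_{-1} + a·e_{p-2}, then σ is the identity. -/
open Polynomial

set_option synthInstance.maxHeartbeats 1000000
set_option maxHeartbeats 1000000

noncomputable section

/-- The truncated polynomial ring `A = k[X]/(X^p)`. -/
abbrev TruncPoly (k : Type*) [Field k] (p : ℕ) : Type _ :=
  k[X] ⧸ Ideal.span {(X : k[X]) ^ p}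

/-- The image `x` of `X` in `A = k[X]/(X^p)`. -/
def xgen (k : Type*) [Field k] (p : ℕ) : TruncPoly k p :=
  Ideal.Quotient.mk _ (X : k[X])

/-- The Witt algebra `W = Der_k(A)`, a Lie algebra over `k`.
Its `k`-basis is `e_i = x^(i+1)∂` for `-1 ≤ i ≤ p-2`; below, `E n` denotes
`x^n • ∂`, i.e. `E n = e_(n-1)`, so the basis is `E 0, …, E (p-1)`. -/
abbrev Witt (k : Type*) [Field k] (p : ℕ) : Type _ :=
  Derivation k (TruncPoly k p) (TruncPoly k p)

/-- The Zariski closure of a subset of affine `n`-space `k^n`:  the zero locus of the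
vanishing ideal of `S`, i.e. the set of points at which every polynomial vanishing
identically on `S` vanishes. -/
def zariskiClosure (k : Type*) [CommSemiring k] {n : ℕ} (S : Set (Fin n → k)) :
    Set (Fin n → k) :=
  {y | ∀ f : MvPolynomial (Fin n) k,
      (∀ s ∈ S, MvPolynomial.eval s f = 0) → MvPolynomial.eval y f = 0}

theorem witt_smul (k : Type*) [Field k] (p : ℕ) (r : k) (u : TruncPoly k p) :
    r • u = algebraMap k (TruncPoly k p) r * u := Algebra.smul_def r u

theorem witt_xpow_p (k : Type*) [Field k] (p : ℕ) : (xgen k p) ^ p = 0 := by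
  unfold xgen
  rw [← map_pow]
  exact Ideal.Quotient.eq_zero_iff_mem.2 (Ideal.subset_span rfl)

theorem witt_xpow_ne (k : Type*) [Field k] (p : ℕ) (hp : 0 < p) : (xgen k p) ^ (p - 1) ≠ 0 := by
  unfold xgen
  rw [← map_pow]
  intro h
  rw [Ideal.Quotient.eq_zero_iff_mem, Ideal.mem_span_singleton] at h
  have := Polynomial.natDegree_le_of_dvd h (pow_ne_zero _ X_ne_zero)
  simp at this
  omega

theorem witt_mk (k : Type*) [Field k] (p : ℕ) (u : TruncPoly k p) :
    ∃ q : k[X], u = aeval (xgen k p) q := by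
  obtain ⟨q, rfl⟩ := Ideal.Quotient.mk_surjective u
  refine ⟨q, ?_⟩
  have h : (Ideal.Quotient.mkₐ k (Ideal.span {(X : k[X]) ^ p})) = aeval (xgen k p) := by
    ext
    simp [xgen]
  exact DFunLike.congr_fun h q

/-- evaluation at `x = 0` -/
theorem witt_eval (k : Type*) [Field k] (p : ℕ) (hp : 0 < p) :
    ∃ ε : TruncPoly k p →ₐ[k] k, ε (xgen k p) = 0 := by
  refine ⟨Ideal.Quotient.liftₐ _ (aeval (0 : k)) ?_, ?_⟩
  · intro q hq
    rw [Ideal.mem_span_singleton] at hq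
    obtain ⟨r, rfl⟩ := hq
    simp [hp.ne']
  · unfold xgen
    rw [Ideal.Quotient.liftₐ_apply]
    simp

theorem witt_decomp (k : Type*) [Field k] (p : ℕ) (ε : TruncPoly k p →ₐ[k] k)
    (hε : ε (xgen k p) = 0) (u : TruncPoly k p) :
    ∃ w, u = algebraMap k _ (ε u) + xgen k p * w := by
  obtain ⟨q, rfl⟩ := witt_mk k p u
  refine ⟨aeval (xgen k p) (divX q), ?_⟩
  have h := X_mul_divX_add q
  have h2 : ε (aeval (xgen k p) q) = q.coeff 0 := by
    rw [← Polynomial.aeval_algHom_apply, hε, ← coeff_zero_eq_aeval_zero]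
  rw [h2]
  have h3 := congrArg (aeval (xgen k p)) h
  rw [map_add, map_mul, aeval_X, aeval_C] at h3
  rw [← h3, add_comm]

theorem witt_der (k : Type*) [Field k] (p : ℕ) (d e : Witt k p)
    (h : d (xgen k p) = e (xgen k p)) : d = e := by
  ext u
  obtain ⟨q, rfl⟩ := witt_mk k p u
  rw [Derivation.map_aeval, Derivation.map_aeval, h]

/-- A family of scalars satisfying the bracket relations vanishes. -/
theorem witt_scalars (k : Type*) [Field k] (p : ℕ) [Fact p.Prime] [CharP k p]
    (hp : 3 < p) (a : k) (t : ℕ → k) (t0 : t 0 = 1) (tp : ∀ n, p ≤ n → t n = 0)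
    (h1 : ∀ i, 2 ≤ i → t i * (i + a * t (p - 1)) = i * t 1 * t (i - 1))
    (h2 : ∀ i j, 2 ≤ i → 2 ≤ j →
      j * t i * t (j - 1) - i * t j * t (i - 1) = (j - i) * t (i + j - 1)) :
    ∀ i, 1 ≤ i → t i = 0 := by
  have hc : ∀ n : ℕ, 0 < n → n < p → (n : k) ≠ 0 := by
    intro n h0 hn h
    rw [CharP.cast_eq_zero_iff k p] at h
    exact absurd (Nat.le_of_dvd h0 h) (by omega)
  have c1 : ((p - 1 : ℕ) : k) = -1 := by
    rw [Nat.cast_sub (by omega)]; simp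
  have c2 : ((p - 2 : ℕ) : k) = -2 := by
    rw [Nat.cast_sub (by omega)]; simp
  have n2 : (2 : k) ≠ 0 := by exact_mod_cast hc 2 (by omega) (by omega)
  have n3 : (3 : k) ≠ 0 := by exact_mod_cast hc 3 (by omega) (by omega)
  have hs : t (p - 1) = 0 := by
    by_contra hs
    have e2 := h2 2 (p - 1) le_rfl (by omega)
    have e3 := h2 3 (p - 1) (by omega) (by omega)
    have f2 := h1 2 le_rfl
    have f3 := h1 3 (by omega)
    have g := h2 2 (p - 2) le_rfl (by omega)
    have f4 := h1 (p - 2) (by omega)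
    rw [tp (2 + (p - 1) - 1) (by omega), show p - 1 - 1 = p - 2 by omega, c1] at e2
    rw [tp (3 + (p - 1) - 1) (by omega), show p - 1 - 1 = p - 2 by omega, c1] at e3
    rw [show 2 + (p - 2) - 1 = p - 1 by omega, show p - 2 - 1 = p - 3 by omega, c2] at g
    norm_num at e2 e3 f2 f3 g
    have k1 : t (p - 1) * t 2 * 3 = 0 := by
      generalize t (p - 1) = s at *
      generalize t (p - 2) = r at *
      linear_combination (-(3 + a * s)) * e3 + 3 * t 1 * e2 - r * f3 - 3 * s * f2
    have k2 : t 2 = 0 := by simpa [hs, n3] using k1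
    have k3 : t 1 = 0 := by
      rw [k2] at f2
      simpa [n2] using f2
    rw [k2, k3] at g
    have h4 : (4 : k) ≠ 0 := by 
      have := mul_ne_zero n2 n2
      norm_num at this
      exact this
    apply hs
    have : 4 * t (p - 1) = 0 := by linear_combination g
    simpa [h4] using this
  have hrec : ∀ i, i < p → t i = t 1 ^ i := by
    intro i
    induction i with
    | zero => simp [t0]
    | succ n ih =>
      intro hn
      rcases Nat.eq_zero_or_pos n with rfl | hn0
      · simp
      · have := h1 (n + 1) (by omega)
        rw [hs, Nat.add_sub_cancel, ih (by omega)] at this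
        apply mul_left_cancel₀ (hc (n + 1) (by omega) hn)
        rw [pow_succ]
        linear_combination this
  have ht1 : t 1 = 0 := by
    rw [hrec (p - 1) (by omega)] at hs
    exact pow_eq_zero_iff (by omega) |>.1 hs
  intro i hi
  rcases lt_or_ge i p with h | h
  · rw [hrec i h, ht1, zero_pow (by omega)]
  · exact tp i h

/-- A `D`-stable family of elements vanishing at `0` is zero. -/
theorem witt_stable (k : Type*) [Field k] (p : ℕ) [Fact p.Prime] [CharP k p]
    (ε : TruncPoly k p →ₐ[k] k) (hε : ε (xgen k p) = 0)
    (D : Witt k p) (c' : TruncPoly k p) (hc : D (xgen k p) * c' = 1)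
    (S : Set (TruncPoly k p)) (hS : ∀ u ∈ S, D u ∈ S) (hS0 : ∀ u ∈ S, ε u = 0) :
    ∀ u ∈ S, u = 0 := by
  have hp0 : 0 < p := (Fact.out : p.Prime).pos
  have key : ∀ m, m ≤ p → ∀ u ∈ S, xgen k p ^ m ∣ u := by
    intro m
    induction m with
    | zero => intro _ u _; simp
    | succ m ih =>
      intro hm u hu
      obtain ⟨v, hv⟩ := ih (by omega) u hu
      obtain ⟨w, hw⟩ := witt_decomp k p ε hε v
      rcases Nat.eq_zero_or_pos m with rfl | hm0
      · have := hS0 u hu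
        rw [hv] at this
        simp at this
        rw [this] at hw
        refine ⟨w, ?_⟩
        rw [hv, hw]; simp
      · obtain ⟨z, hz⟩ := ih (by omega) (D u) (hS u hu)
        have hD : D u = xgen k p ^ m * D v + v * (m * xgen k p ^ (m - 1) * D (xgen k p)) := by
          rw [hv, Derivation.leibniz, Derivation.leibniz_pow]
          simp [mul_assoc]
        by_cases hev : ε v = 0
        · rw [hev] at hw
          refine ⟨w, ?_⟩
          rw [hv, hw, pow_succ]; simp [mul_assoc]
        · exfalso
          have e1 : xgen k p ^ (p - m) * xgen k p ^ m = 0 := by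
            rw [← pow_add, Nat.sub_add_cancel (by omega), witt_xpow_p]
          have e2 : xgen k p ^ (p - m) * xgen k p ^ (m - 1) = xgen k p ^ (p - 1) := by
            rw [← pow_add]; congr 1; omega
          have e3 : xgen k p ^ (p - 1) * xgen k p = 0 := by
            rw [← pow_succ, Nat.sub_add_cancel hp0, witt_xpow_p]
          have e4 : (m : TruncPoly k p) * algebraMap k _ (ε v) * xgen k p ^ (p - 1) = 0 := by
            rw [hz] at hD
            generalize D v = Dv at *
            generalize D (xgen k p) = Dx at *
            generalize algebraMap k (TruncPoly k p) (ε v) = b at *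
            generalize xgen k p ^ (p - m) = X1 at *
            generalize xgen k p ^ (p - 1) = X2 at *
            generalize xgen k p ^ (m - 1) = X3 at *
            generalize xgen k p ^ m = X4 at *
            generalize xgen k p = x at *
            subst hw
            linear_combination (-X1 * c') * hD + (z * c' - Dv * c') * e1 - (b + x * w) * m * Dx * c' * e2
              - m * b * X2 * hc - m * w * Dx * c' * e3
          have e5 : ((m : k) * ε v) • xgen k p ^ (p - 1) = 0 := by
            rw [witt_smul, map_mul, map_natCast]; exact e4
          have hmk : (m : k) ≠ 0 := by
            intro h
            rw [CharP.cast_eq_zero_iff k p] at h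
            exact absurd (Nat.le_of_dvd hm0 h) (by omega)
          rcases smul_eq_zero.1 e5 with h | h
          · exact mul_ne_zero hmk hev h
          · exact witt_xpow_ne k p hp0 h
  intro u hu
  obtain ⟨v, hv⟩ := key p le_rfl u hu
  rw [hv, witt_xpow_p, zero_mul]

/-- the stabilizer in `G = Aut(W)` of `e₋₁ + a·e_(p-2)` is trivial. -/
theorem witt_stabilizer_trivial
    (k : Type*) [Field k] [IsAlgClosed k] (p : ℕ) [Fact p.Prime] [CharP k p]
    (hp : 3 < p)
    (δ : Witt k p) (hδ : δ (xgen k p) = 1)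
    (E : ℕ → Witt k p) (hE : ∀ n, E n = (xgen k p) ^ n • δ)
    (a : k) (σ : Witt k p ≃ₗ⁅k⁆ Witt k p)
    (hσ : σ (E 0 + a • E (p - 1)) = E 0 + a • E (p - 1)) :
    ∀ v : Witt k p, σ v = v := by
  obtain ⟨ε, hε⟩ := witt_eval k p (by omega)
  obtain ⟨D, hD⟩ : ∃ D, D = E 0 + a • E (p - 1) := ⟨_, rfl⟩
  rw [← hD] at hσ
  obtain ⟨α, hα⟩ : ∃ α, α = algebraMap k (TruncPoly k p) a := ⟨_, rfl⟩
  have hDx : D (xgen k p) = 1 + α * xgen k p ^ (p - 1) := by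
    rw [hD, hE, hE, hα]
    simp [hδ, witt_smul]
  have hbig : ∀ n, p ≤ n → xgen k p ^ n = 0 := fun n hn =>
    pow_eq_zero_of_le hn (witt_xpow_p k p)
  obtain ⟨c', hc'⟩ : ∃ c', c' = 1 - α * xgen k p ^ (p - 1) := ⟨_, rfl⟩
  have hc : D (xgen k p) * c' = 1 := by
    have := hbig ((p - 1) + (p - 1)) (by omega)
    rw [pow_add] at this
    rw [hDx, hc']
    linear_combination (-α ^ 2) * this
  have hrep : ∀ d : Witt k p, d = (c' * d (xgen k p)) • D := by
    intro d
    apply witt_der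
    simp only [Derivation.smul_apply, smul_eq_mul]
    linear_combination (-d (xgen k p)) * hc
  have hinj : ∀ f g : TruncPoly k p, f • D = g • D → f = g := by
    intro f g h
    have h2 := DFunLike.congr_fun h (xgen k p)
    simp only [Derivation.smul_apply, smul_eq_mul] at h2
    linear_combination c' * h2 + (g - f) * hc
  have hφ : ∀ f : TruncPoly k p, ∃ g, σ (f • D) = g • D := fun f => ⟨_, hrep _⟩
  choose φ hφ using hφ
  have hadd : ∀ f g, φ (f + g) = φ f + φ g := by
    intro f g
    apply hinj
    rw [← hφ, add_smul, add_smul, map_add, hφ, hφ]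
  have hsmul : ∀ (r : k) f, φ (r • f) = r • φ f := by
    intro r f
    apply hinj
    rw [← hφ, smul_assoc, smul_assoc, map_smul, hφ]
  have hone : φ 1 = 1 := by
    apply hinj
    rw [← hφ, one_smul, hσ]
  have hbr : ∀ f g : TruncPoly k p, ⁅f • D, g • D⁆ = (f * D g - g * D f) • D := by
    intro f g
    apply witt_der
    simp only [Derivation.commutator_apply, Derivation.smul_apply, smul_eq_mul,
      Derivation.leibniz]
    ring
  have hφbr : ∀ f g, φ (f * D g - g * D f) = φ f * D (φ g) - φ g * D (φ f) := by
    intro f g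
    apply hinj
    rw [← hφ, ← hbr, LieEquiv.map_lie, hφ, hφ, hbr]
  have hφD : ∀ g, φ (D g) = D (φ g) := by
    intro g
    have := hφbr 1 g
    simpa [hone] using this
  let L : TruncPoly k p →ₗ[k] k :=
    ε.toLinearMap ∘ₗ { toFun := φ, map_add' := hadd, map_smul' := hsmul }
  have hL : ∀ f, L f = ε (φ f) := fun f => rfl
  have hLbr : ∀ f g, L (f * D g - g * D f) = L f * L (D g) - L g * L (D f) := by
    intro f g
    rw [hL, hφbr]
    simp [hL, hφD]
  have hDpow : ∀ i : ℕ, 2 ≤ i → D (xgen k p ^ i) = (i : k) • xgen k p ^ (i - 1) := by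
    intro i hi
    rw [Derivation.leibniz_pow, hDx]
    have := hbig ((i - 1) + (p - 1)) (by omega)
    rw [pow_add] at this
    simp only [smul_eq_mul, nsmul_eq_mul, witt_smul, map_natCast]
    linear_combination (i * α) * this
  have ht : ∀ i, 1 ≤ i → L (xgen k p ^ i) = 0 := by
    apply witt_scalars k p hp a (fun i => L (xgen k p ^ i))
    · simp [hL, hone]
    · intro n hn
      simp [hbig n hn]
    · intro i hi
      have h := hLbr (xgen k p ^ i) (xgen k p)
      have e : xgen k p ^ i * D (xgen k p) - xgen k p * D (xgen k p ^ i)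
          = (1 - i : k) • xgen k p ^ i := by
        rw [hDpow i hi, hDx]
        have h3 := hbig (i + (p - 1)) (by omega)
        rw [pow_add] at h3
        have h4 : xgen k p ^ i = xgen k p ^ (i - 1) * xgen k p := by
          rw [← pow_succ]; congr 1; omega
        simp only [witt_smul, map_natCast, map_sub, map_one]
        linear_combination α * h3 + i * h4
      have e2 : L (D (xgen k p)) = 1 + a * L (xgen k p ^ (p - 1)) := by
        rw [hDx, hα, ← witt_smul, map_add, map_smul, hL 1, hone]
        simp
      rw [e, e2, hDpow i hi] at h
      simp only [map_smul, smul_eq_mul] at h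
      simp only [pow_one]
      linear_combination -h
    · intro i j hi hj
      have h := hLbr (xgen k p ^ i) (xgen k p ^ j)
      have e : xgen k p ^ i * D (xgen k p ^ j) - xgen k p ^ j * D (xgen k p ^ i)
          = (j - i : k) • xgen k p ^ (i + j - 1) := by
        rw [hDpow i hi, hDpow j hj]
        have h3 : xgen k p ^ i * xgen k p ^ (j - 1) = xgen k p ^ (i + j - 1) := by
          rw [← pow_add]; congr 1; omega
        have h4 : xgen k p ^ j * xgen k p ^ (i - 1) = xgen k p ^ (i + j - 1) := by
          rw [← pow_add]; congr 1; omega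
        simp only [witt_smul, map_natCast, map_sub]
        linear_combination j * h3 - i * h4
      rw [e, hDpow i hi, hDpow j hj] at h
      simp only [map_smul, smul_eq_mul] at h
      linear_combination -h
  have hLε : ∀ f, L f = ε f := by
    intro f
    obtain ⟨q, rfl⟩ := witt_mk k p f
    induction q using Polynomial.induction_on' with
    | add q r hq hr => simp only [map_add, hq, hr]
    | monomial n b =>
      rw [aeval_monomial, ← witt_smul, map_smul, map_smul]
      congr 1
      rcases Nat.eq_zero_or_pos n with rfl | hn
      · simp [hL, hone]
      · rw [ht n hn, map_pow, hε, zero_pow hn.ne']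
  have hid : ∀ f, φ f = f := by
    intro f
    have := witt_stable k p ε hε D c' hc {u | ∃ f, u = φ f - f} ?_ ?_ (φ f - f) ⟨f, rfl⟩
    · exact sub_eq_zero.1 this
    · rintro u ⟨f, rfl⟩
      exact ⟨D f, by rw [hφD, map_sub]⟩
    · rintro u ⟨f, rfl⟩
      rw [map_sub, ← hL, hLε, sub_self]
  intro v
  rw [hrep v, hφ, hid]
end
end

section
/- Let a ∈ k with a ≠ 0, and let B = {b ∈ k : b^{p-1} = -a}. Then the set W(-a) = {w ∈ W : w ≠ 0 and w^p = -a·w} (where w^p denotes the p-fold composition of w as an endomorphism of A) equals the union of the G-orbit of e_{-1} + a·e_{p-2} together with the G-orbits of b·e_0 for all b ∈ B; that is, W(-a) = G(e_{-1} + a·e_{p-2}) ∪ ⋃_{b ∈ B} G(b·e_0). -/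
open Polynomial

set_option synthInstance.maxHeartbeats 1000000
set_option maxHeartbeats 1000000

noncomputable section

section General

variable {k : Type*} [Field k] {p : ℕ} {A : Type*} [CommRing A] [Algebra k A]

lemma comm_iter_pow (k : Type*) [Field k] (p : ℕ) [Fact p.Prime] [CharP k p]
    {R : Type*} [Ring R] [Algebra k R] [Nontrivial R] (w v : R) :
    (fun v : R => w * v - v * w)^[p] v = w ^ p * v - v * w ^ p := by
  have : Nontrivial (Module.End k R) := inferInstance
  have : CharP (Module.End k R) p :=
    charP_of_injective_algebraMap (algebraMap k (Module.End k R)).injective p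
  have hc : Commute (LinearMap.mulLeft k w) (LinearMap.mulRight k w) :=
    LinearMap.commute_mulLeft_right w w
  have h := sub_pow_char_of_commute p hc
  rw [LinearMap.pow_mulLeft, LinearMap.pow_mulRight] at h
  have h2 := congrArg (fun f : Module.End k R => f v) h
  simp only [Module.End.pow_apply, LinearMap.sub_apply, LinearMap.mulLeft_apply,
    LinearMap.mulRight_apply] at h2
  exact h2

/-- The `p`-th power of a derivation is a derivation. -/
lemma exists_pow_der [Fact p.Prime] [CharP k p] [Nontrivial A] (w : Derivation k A A) :
    ∃ T : Derivation k A A, (T.toLinearMap : Module.End k A) = w.toLinearMap ^ p := by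
  set W : Module.End k A := w.toLinearMap with hW
  have hs : ∀ (n : ℕ) (f : A), (fun v : Module.End k A => W * v - v * W)^[n] (LinearMap.mulLeft k f)
      = LinearMap.mulLeft k ((W ^ n) f) := by
    intro n
    induction n with
    | zero => intro f; simp
    | succ n ih =>
      intro f
      rw [Function.iterate_succ_apply', ih, pow_succ']
      ext g
      simp only [LinearMap.sub_apply, Module.End.mul_apply, LinearMap.mulLeft_apply]
      have : ∀ g, W g = w g := fun _ => rfl
      simp only [this, Derivation.leibniz, smul_eq_mul]
      ring
  have key : ∀ f g : A, (W ^ p) (f * g) = f * (W ^ p) g + g * (W ^ p) f := by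
    intro f g
    have h1 := hs p f
    rw [comm_iter_pow k p] at h1
    have h2 := congrArg (fun T : Module.End k A => T g) h1
    simp only [LinearMap.sub_apply, Module.End.mul_apply, LinearMap.mulLeft_apply] at h2
    linear_combination h2
  exact ⟨Derivation.mk' (W ^ p) (by intro f g; simpa using key f g), rfl⟩

lemma ad_iter [Fact p.Prime] [CharP k p] [Nontrivial A] (w T v : Derivation k A A)
    (hT : (T.toLinearMap : Module.End k A) = w.toLinearMap ^ p) :
    (fun v : Derivation k A A => ⁅w, v⁆)^[p] v = ⁅T, v⁆ := by
  have hs : ∀ n : ℕ, (((fun v : Derivation k A A => ⁅w, v⁆)^[n] v).toLinearMap : Module.End k A) =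
      (fun v : Module.End k A => w.toLinearMap * v - v * w.toLinearMap)^[n] v.toLinearMap := by
    intro n
    induction n with
    | zero => simp
    | succ n ih =>
      rw [Function.iterate_succ_apply', Function.iterate_succ_apply', ← ih]
      rfl
  have h := hs p
  rw [comm_iter_pow k p, ← hT] at h
  ext f
  exact congrArg (fun L : Module.End k A => L f) h

/-- Conjugation of derivations by an algebra automorphism. -/
def derConj (φ : A ≃ₐ[k] A) (D : Derivation k A A) : Derivation k A A :=
  Derivation.mk' ((φ.toLinearMap ∘ₗ D.toLinearMap) ∘ₗ φ.symm.toLinearMap) (by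
    intro f g
    simp [Derivation.leibniz])

lemma derConj_apply (φ : A ≃ₐ[k] A) (D : Derivation k A A) (f : A) :
    derConj φ D f = φ (D (φ.symm f)) := rfl

/-- Conjugation as a Lie algebra automorphism. -/
def derConjLie (φ : A ≃ₐ[k] A) : Derivation k A A ≃ₗ⁅k⁆ Derivation k A A where
  toFun := derConj φ
  map_add' D D' := by ext f; simp [derConj_apply]
  map_smul' c D := by ext f; simp [derConj_apply]
  map_lie' := by
    intro D D'
    ext f
    simp [derConj_apply, Derivation.commutator_apply]
  invFun := derConj φ.symm
  left_inv D := by ext f; simp [derConj_apply]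
  right_inv D := by ext f; simp [derConj_apply]

lemma derConjLie_apply (φ : A ≃ₐ[k] A) (D : Derivation k A A) (f : A) :
    derConjLie φ D f = φ (D (φ.symm f)) := rfl

/-- The properties of the truncated polynomial ring that are used. -/
structure Setup (k : Type*) [Field k] (p : ℕ) (A : Type*) [CommRing A] [Algebra k A]
    (x : A) (ε : A →ₐ[k] k) (δ : Derivation k A A) : Prop where
  eps_x : ε x = 0
  x_pow : x ^ p = 0
  x_pow_ne : x ^ (p - 1) ≠ 0
  div : ∀ h, ε h = 0 → ∃ g, h = x * g
  del : δ x = 1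
  ext : ∀ w : Derivation k A A, w = w x • δ
  fin : Module.Finite k A
  lift : ∀ y, y ^ p = 0 → ∃ φ : A →ₐ[k] A, φ x = y

variable {x : A} {ε : A →ₐ[k] k} {δ : Derivation k A A}

lemma Setup.app (S : Setup k p A x ε δ) (w : Derivation k A A) (f : A) : w f = w x * δ f := by
  conv_lhs => rw [S.ext w]
  simp

lemma Setup.nontriv (S : Setup k p A x ε δ) : Nontrivial A := ⟨⟨_, _, S.x_pow_ne⟩⟩

lemma Setup.ext_x (S : Setup k p A x ε δ) {w v : Derivation k A A} (h : w x = v x) : w = v := by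
  rw [S.ext w, S.ext v, h]

/-- The condition defining `W(-a)`. -/
def PC (p : ℕ) (a : k) (w : Derivation k A A) : Prop :=
  w ≠ 0 ∧ (w.toLinearMap : Module.End k A) ^ p = (-a) • (w.toLinearMap : Module.End k A)

lemma Setup.pc_of_x [Fact p.Prime] [CharP k p] (S : Setup k p A x ε δ) {a : k}
    {w : Derivation k A A} (h0 : w ≠ 0)
    (h : ((w.toLinearMap : Module.End k A) ^ p) x = (-a) • w x) : PC p a w := by
  have := S.nontriv
  refine ⟨h0, ?_⟩
  obtain ⟨T, hT⟩ := exists_pow_der (p := p) w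
  rw [← hT] at h ⊢
  have : T = (-a) • w := S.ext_x h
  rw [this]; rfl

lemma Setup.pc_map [Fact p.Prime] [CharP k p] (S : Setup k p A x ε δ) {a : k}
    {w : Derivation k A A} (h : PC p a w) (σ : Derivation k A A ≃ₗ⁅k⁆ Derivation k A A) :
    PC p a (σ w) := by
  have := S.nontriv
  refine ⟨fun h0 => h.1 (by simpa using h0), ?_⟩
  obtain ⟨T, hT⟩ := exists_pow_der (p := p) (σ w)
  have h1 : ∀ v, (fun v : Derivation k A A => ⁅w, v⁆)^[p] v = (-a) • ⁅w, v⁆ := by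
    intro v
    have := ad_iter (p := p) w ((-a) • w) v (by rw [h.2]; rfl)
    rw [this, smul_lie]
  have h2 : ∀ v, (fun v : Derivation k A A => ⁅σ w, v⁆)^[p] (σ v) =
      σ ((fun v : Derivation k A A => ⁅w, v⁆)^[p] v) := by
    intro v
    have hsc : Function.Semiconj σ (fun v : Derivation k A A => ⁅w, v⁆)
        (fun v : Derivation k A A => ⁅σ w, v⁆) := by
      intro v; exact LieHom.map_lie σ.toLieHom w v
    exact ((hsc.iterate_right p) v).symm
  have h3 : ∀ v : Derivation k A A, ⁅T, v⁆ = (-a) • ⁅σ w, v⁆ := by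
    intro v
    obtain ⟨u, rfl⟩ := σ.surjective v
    change ⁅T, σ u⁆ = (-a) • ⁅σ w, σ u⁆
    rw [← ad_iter (p := p) (σ w) T (σ u) hT, h2, h1]
    have h6 : σ ⁅w, u⁆ = ⁅σ w, σ u⁆ := LieHom.map_lie σ.toLieHom w u
    rw [← h6]
    exact σ.toLieHom.map_smul (-a) ⁅w, u⁆
  have h4 : T = (-a) • σ w := by
    have h5 : ∀ v : Derivation k A A, ⁅T - (-a) • σ w, v⁆ = 0 := by
      intro v; rw [sub_lie, h3, smul_lie, sub_self]
    set U := T - (-a) • σ w with hU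
    have e1 := congrArg (fun D : Derivation k A A => D x) (h5 δ)
    have e2 := congrArg (fun D : Derivation k A A => D x) (h5 (x • δ))
    simp only [Derivation.commutator_apply, Derivation.smul_apply, S.del, smul_eq_mul, mul_one,
      Derivation.map_one_eq_zero, Derivation.zero_apply, zero_sub] at e1 e2
    have e3 : δ (U x) = 0 := by linear_combination -e1
    have e4 : U x = 0 := by rw [e3] at e2; linear_combination e2
    have e5 : U = 0 := S.ext_x (by simpa using e4)
    exact sub_eq_zero.mp e5
  rw [← hT, h4]; rfl

lemma Setup.unit (S : Setup k p A x ε δ) {g : A} (h : ε g ≠ 0) : IsUnit g := by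
  obtain ⟨q, hq⟩ := S.div (g - algebraMap k A (ε g)) (by simp)
  have h1 : IsNilpotent (x * q) := ⟨p, by rw [mul_pow, S.x_pow, zero_mul]⟩
  have h2 : IsUnit (algebraMap k A (ε g)) := (IsUnit.mk0 _ h).map _
  have : g = algebraMap k A (ε g) + x * q := by rw [← hq]; ring
  rw [this, add_comm]
  exact h1.isUnit_add_right_of_commute h2 (Commute.all _ _)

lemma Setup.eps_zero (S : Setup k p A x ε δ) {m : ℕ} (hm : m < p) {h : A} (hh : x ^ m * h = 0) :
    ε h = 0 := by
  by_contra hne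
  obtain ⟨u, hu⟩ := S.unit hne
  have : x ^ m = 0 := by
    rw [← hu] at hh; simpa using hh
  apply S.x_pow_ne
  have h2 : p - 1 = m + (p - 1 - m) := by omega
  rw [h2, pow_add, this, zero_mul]

/-- The automorphism moving `x` to a given generator of the maximal ideal. -/
lemma Setup.exists_aut (S : Setup k p A x ε δ) {y : A} (h0 : ε y = 0) (h1 : ε (δ y) ≠ 0) :
    ∃ φ : A ≃ₐ[k] A, φ x = y := by
  obtain ⟨g, hg⟩ := S.div y h0
  obtain ⟨φ, hφ⟩ := S.lift y (by rw [hg, mul_pow, S.x_pow, zero_mul])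
  have hg1 : ε g ≠ 0 := by
    rw [hg] at h1
    simpa [S.eps_x, S.del] using h1
  have hgu := S.unit hg1
  have heps : ∀ h, ε (φ h) = ε h := by
    intro h
    obtain ⟨q, hq⟩ := S.div (h - algebraMap k A (ε h)) (by simp)
    have : h = algebraMap k A (ε h) + x * q := by rw [← hq]; ring
    conv_lhs => rw [this]
    simp [hφ, h0]
  have hinj : Function.Injective φ := by
    rw [injective_iff_map_eq_zero]
    intro q hq
    have : ∀ m, m ≤ p → ∃ h, q = x ^ m * h := by
      intro m
      induction m with
      | zero => intro _; exact ⟨q, by simp⟩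
      | succ m ih =>
        intro hm
        obtain ⟨h, rfl⟩ := ih (by omega)
        rw [map_mul, map_pow, hφ, hg, mul_pow, mul_right_comm] at hq
        have h3 : x ^ m * φ h = 0 := by
          obtain ⟨u, hu⟩ := hgu.pow m
          rw [← hu] at hq
          simpa using hq
        have h4 := S.eps_zero (by omega) h3
        rw [heps] at h4
        obtain ⟨r, rfl⟩ := S.div h h4
        exact ⟨r, by ring⟩
    obtain ⟨h, hh⟩ := this p le_rfl
    rw [hh, S.x_pow, zero_mul]
  have := S.fin
  have hsurj : Function.Surjective φ :=
    (LinearMap.injective_iff_surjective (f := φ.toLinearMap)).mp hinj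
  exact ⟨AlgEquiv.ofBijective φ ⟨hinj, hsurj⟩, hφ⟩

lemma Setup.conj (S : Setup k p A x ε δ) {y : A} (h0 : ε y = 0) (h1 : ε (δ y) ≠ 0)
    {w v : Derivation k A A} (h : ∀ φ : A ≃ₐ[k] A, φ x = y → w y = φ (v x)) :
    ∃ σ : Derivation k A A ≃ₗ⁅k⁆ Derivation k A A, σ v = w := by
  obtain ⟨φ, hφ⟩ := S.exists_aut h0 h1
  refine ⟨derConjLie φ, ?_⟩
  have e1 : derConjLie φ v y = w y := by
    rw [derConjLie_apply, h φ hφ]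
    congr 2
    rw [← hφ]; simp
  rw [S.app, S.app w] at e1
  exact S.ext_x ((S.unit h1).mul_right_cancel e1)

lemma pc_eig {a b : k} [Fact p.Prime] {w : Derivation k A A} (hw : PC p a w)
    (hb : b ^ (p - 1) = -a) (g : A) :
    w (∑ i ∈ Finset.range (p - 1), b ^ (p - 1 - 1 - i) • ((w.toLinearMap ^ (i + 1) : Module.End k A) g))
      = b • (∑ i ∈ Finset.range (p - 1),
          b ^ (p - 1 - 1 - i) • ((w.toLinearMap ^ (i + 1) : Module.End k A) g)) := by
  have hp1 : p - 1 + 1 = p := Nat.sub_add_cancel (Fact.out : p.Prime).one_le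
  set W : Module.End k A := w.toLinearMap with hW
  have hc : Commute W (algebraMap k (Module.End k A) b) := (Algebra.commutes b W).symm
  have h1 := hc.mul_geom_sum₂ (p - 1)
  have h2 := congrArg (fun T : Module.End k A => (T * W) g) h1
  have h3 : (W ^ (p - 1) - algebraMap k (Module.End k A) b ^ (p - 1)) * W = 0 := by
    rw [← map_pow, hb, sub_mul, ← pow_succ, hp1, hw.2, ← Algebra.smul_def, sub_self]
  simp only [h3] at h2
  have h4 : ((∑ i ∈ Finset.range (p - 1), W ^ i * algebraMap k (Module.End k A) b ^ (p - 1 - 1 - i))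
      * W) g = ∑ i ∈ Finset.range (p - 1), b ^ (p - 1 - 1 - i) • ((W ^ (i + 1)) g) := by
    rw [Finset.sum_mul, LinearMap.sum_apply]
    refine Finset.sum_congr rfl fun i _ => ?_
    rw [← map_pow, ← Algebra.commutes, mul_assoc, ← pow_succ, ← Algebra.smul_def]
    rfl
  rw [mul_assoc, Module.End.mul_apply, h4] at h2
  rw [LinearMap.sub_apply, Module.algebraMap_end_apply, LinearMap.zero_apply] at h2
  exact sub_eq_zero.mp h2

lemma der_pow_x (x : A) (w : Derivation k A A) (j n : ℕ) :
    ∃ h, ((w.toLinearMap ^ j : Module.End k A) (x ^ (n + j))) =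
      ((n + j).descFactorial j : A) * (w x) ^ j * x ^ n + x ^ (n + 1) * h := by
  induction j generalizing n with
  | zero => exact ⟨0, by simp⟩
  | succ j ih =>
    obtain ⟨h, hh⟩ := ih (n + 1)
    rw [pow_succ', Module.End.mul_apply, show n + (j + 1) = n + 1 + j by ring, hh]
    refine ⟨((n + 1 + j).descFactorial j : A) * w (w x ^ j) + ((n : A) + 2) * w x * h + x * w h, ?_⟩
    have e : ∀ f, (w.toLinearMap : Module.End k A) f = w f := fun _ => rfl
    rw [e, map_add, Derivation.leibniz, Derivation.leibniz, Derivation.leibniz,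
      Derivation.leibniz_pow w x, Derivation.leibniz_pow w x, Derivation.map_natCast,
      Nat.descFactorial_succ, show n + 1 + j - j = n + 1 by omega]
    simp only [smul_eq_mul, nsmul_eq_mul, Nat.add_sub_cancel, show n + 1 + 1 - 1 = n + 1 by omega]
    push_cast
    ring

lemma Setup.case_one [Fact p.Prime] [CharP k p] (S : Setup k p A x ε δ) {a b : k} (ha : a ≠ 0)
    {w : Derivation k A A} (hw : PC p a w) (hb : b ^ (p - 1) = -a) (h0 : ε (w x) ≠ 0) :
    ∃ σ : Derivation k A A ≃ₗ⁅k⁆ Derivation k A A, σ (b • (δ + x • δ)) = w := by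
  have hpp : p.Prime := Fact.out
  have hp2 := hpp.two_le
  have hb0 : b ≠ 0 := by
    rintro rfl
    rw [zero_pow (by omega)] at hb
    exact ha (by simpa using hb.symm)
  have hz := pc_eig hw hb (x ^ (p - 1))
  set z := ∑ i ∈ Finset.range (p - 1),
    b ^ (p - 1 - 1 - i) • ((w.toLinearMap ^ (i + 1) : Module.End k A) (x ^ (p - 1))) with hzdef
  have hez : ε z ≠ 0 := by
    rw [hzdef, map_sum, Finset.sum_eq_single (p - 2)]
    · obtain ⟨h, hh⟩ := der_pow_x x w (p - 1) 0
      rw [zero_add] at hh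
      rw [show p - 2 + 1 = p - 1 by omega, hh]
      have : ((p - 1).descFactorial (p - 1) : k) ≠ 0 := by
        rw [Nat.descFactorial_self, Ne, CharP.cast_eq_zero_iff k p, hpp.dvd_factorial]
        omega
      simp [S.eps_x, hb0, this, h0]
    · intro j hj hj2
      rw [Finset.mem_range] at hj
      obtain ⟨h, hh⟩ := der_pow_x x w (j + 1) (p - 2 - j)
      rw [show p - 2 - j + (j + 1) = p - 1 by omega] at hh
      rw [hh]
      have : p - 2 - j ≠ 0 := by omega
      simp [S.eps_x, this]
    · intro h
      rw [Finset.mem_range] at h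
      omega
  set y := (ε z)⁻¹ • z - 1 with hy
  have hwy : w y = b • (1 + y) := by
    rw [hy, map_sub, Derivation.map_smul, hz, Derivation.map_one_eq_zero, smul_comm]
    simp
  have hy0 : ε y = 0 := by simp [hy, hez]
  refine S.conj (y := y) hy0 ?_ ?_
  · intro h
    have e := congrArg ε hwy
    rw [S.app, map_mul, h] at e
    simp [hy0] at e
    exact hb0 e.symm
  · intro φ hφ
    rw [hwy]
    simp [S.del, hφ]

lemma Setup.case_two [Fact p.Prime] [CharP k p] (S : Setup k p A x ε δ) {a : k} (ha : a ≠ 0)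
    {w : Derivation k A A} (hw : PC p a w) (h0 : ε (w x) = 0) :
    ∃ b : k, b ^ (p - 1) = -a ∧
      ∃ σ : Derivation k A A ≃ₗ⁅k⁆ Derivation k A A, σ (b • (x • δ)) = w := by
  have hpp : p.Prime := Fact.out
  have hp2 := hpp.two_le
  obtain ⟨g, hg⟩ := S.div _ h0
  have e : ∀ f, (w.toLinearMap : Module.End k A) f = w f := fun _ => rfl
  have hj : ∀ j : ℕ, ∃ h, (w.toLinearMap ^ j : Module.End k A) x = x * h ∧ ε h = (ε g) ^ j := by
    intro j
    induction j with
    | zero => exact ⟨1, by simp⟩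
    | succ j ih =>
      obtain ⟨h, hh, hh2⟩ := ih
      refine ⟨g * h + w h, ?_, ?_⟩
      · rw [pow_succ', Module.End.mul_apply, hh, e, Derivation.leibniz, hg]
        simp only [smul_eq_mul]
        ring
      · rw [S.app w h, hg]
        simp [S.eps_x, hh2, pow_succ']
  have hd : ∀ j : ℕ, ε (δ ((w.toLinearMap ^ j : Module.End k A) x)) = (ε g) ^ j := by
    intro j
    obtain ⟨h, hh, hh2⟩ := hj j
    rw [hh, ← hh2]
    simp [S.eps_x, S.del]
  have hβ : ε g ^ p = -a * ε g := by
    rw [← hd p, hw.2]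
    rw [LinearMap.smul_apply, e, hg, Derivation.map_smul]
    simp [S.eps_x, S.del]
  have hβ0 : ε g ≠ 0 := by
    intro hg0
    obtain ⟨q, hq⟩ := S.div _ hg0
    have hn : ∀ j : ℕ, ∃ h, (w.toLinearMap ^ j : Module.End k A) x = x ^ (j + 1) * h := by
      intro j
      induction j with
      | zero => exact ⟨1, by simp⟩
      | succ j ih =>
        obtain ⟨h, hh⟩ := ih
        refine ⟨((j : A) + 1) * q * h + q * x * δ h, ?_⟩
        rw [pow_succ', Module.End.mul_apply, hh, e, Derivation.leibniz, Derivation.leibniz_pow,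
          S.app w h, hg, hq]
        simp only [smul_eq_mul, nsmul_eq_mul, Nat.add_sub_cancel]
        push_cast
        ring
    obtain ⟨h, hh⟩ := hn p
    rw [pow_succ, S.x_pow, hw.2, LinearMap.smul_apply, e] at hh
    have : w x = 0 := by
      have h3 : (-a) • w x = 0 := by rw [hh]; ring
      exact (smul_eq_zero.mp h3).resolve_left (neg_ne_zero.mpr ha)
    exact hw.1 (S.ext_x (by simpa using this))
  have hb : ε g ^ (p - 1) = -a := by
    have : ε g ^ p = ε g ^ (p - 1) * ε g := by rw [← pow_succ]; congr 1; omega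
    rw [this] at hβ
    exact mul_right_cancel₀ hβ0 hβ
  refine ⟨ε g, hb, ?_⟩
  have hz := pc_eig hw hb x
  set z := ∑ i ∈ Finset.range (p - 1),
    ε g ^ (p - 1 - 1 - i) • ((w.toLinearMap ^ (i + 1) : Module.End k A) x) with hzdef
  refine S.conj (y := z) ?_ ?_ ?_
  · rw [hzdef, map_sum]
    refine Finset.sum_eq_zero fun i _ => ?_
    obtain ⟨h, hh, _⟩ := hj (i + 1)
    rw [hh]
    simp [S.eps_x]
  · have : ε (δ z) = a := by
      rw [hzdef, map_sum, map_sum]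
      have : ∀ i ∈ Finset.range (p - 1), ε (δ (ε g ^ (p - 1 - 1 - i) •
          ((w.toLinearMap ^ (i + 1) : Module.End k A) x))) = -a := by
        intro i hi
        rw [Finset.mem_range] at hi
        rw [Derivation.map_smul, map_smul, hd, smul_eq_mul, ← pow_add, ← hb]
        congr 1
        omega
      rw [Finset.sum_congr rfl this, Finset.sum_const, Finset.card_range, nsmul_eq_mul,
        Nat.cast_sub hpp.one_le, CharP.cast_eq_zero]
      simp
    rwa [this]
  · intro φ hφ
    rw [hz]
    simp [S.del, hφ]

lemma Setup.pc_one [Fact p.Prime] [CharP k p] (S : Setup k p A x ε δ) (hp : 3 < p) (a : k) :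
    PC p a (δ + a • (x ^ (p - 1) • δ)) := by
  have hpp : p.Prime := Fact.out
  set w := δ + a • (x ^ (p - 1) • δ) with hw
  have hwx : w x = 1 + a • x ^ (p - 1) := by simp [hw, S.del]
  have e : ∀ f, (w.toLinearMap : Module.End k A) f = w f := fun _ => rfl
  have := S.nontriv
  refine S.pc_of_x ?_ ?_
  · intro h
    have h2 := congrArg ε hwx
    have h3 : p - 1 ≠ 0 := by omega
    rw [h] at h2
    simp [S.eps_x, h3] at h2
  · have h1 : ∀ j : ℕ, (w.toLinearMap ^ j : Module.End k A) (x ^ (j + 1)) = ((j + 1).factorial : k) • x := by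
      intro j
      induction j with
      | zero => simp
      | succ j ih =>
        have h2 : w (x ^ (j + 1 + 1)) = ((j + 1 + 1 : ℕ) : k) • x ^ (j + 1) := by
          rw [Derivation.leibniz_pow, hwx]
          have h3 : x ^ (j + 1) * x ^ (p - 1) = 0 := by
            rw [← pow_add, show j + 1 + (p - 1) = p + j by omega, pow_add, S.x_pow, zero_mul]
          rw [Nat.add_sub_cancel, smul_eq_mul, mul_add, mul_one, Algebra.mul_smul_comm, h3,
            smul_zero, add_zero, Nat.cast_smul_eq_nsmul]
        rw [pow_succ, Module.End.mul_apply, e, h2, map_smul, ih, smul_smul,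
          Nat.factorial_succ (j + 1)]
        push_cast
        rfl
    have h2 := h1 (p - 2)
    rw [show p - 2 + 1 = p - 1 by omega] at h2
    have hwil : ((p - 1).factorial : k) = -1 := by
      have h5 := ZMod.wilsons_lemma p
      have h6 := congrArg (ZMod.castHom (dvd_refl p) k) h5
      rwa [map_natCast, map_neg, map_one] at h6
    rw [hwil] at h2
    have h3 : (w.toLinearMap ^ (p - 1) : Module.End k A) 1 = 0 := by
      rw [show p - 1 = p - 2 + 1 by omega, pow_succ, Module.End.mul_apply, e,
        Derivation.map_one_eq_zero, map_zero]
    have h4 : (w.toLinearMap ^ (p - 1) : Module.End k A) (x ^ (p - 1)) = - w x := by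
      conv_lhs => rw [show w.toLinearMap ^ (p - 1) = w.toLinearMap ^ (p - 2 + 1) by congr 1; omega]
      rw [pow_succ', Module.End.mul_apply, h2, map_smul, e]
      simp
    conv_lhs => rw [show w.toLinearMap ^ p = w.toLinearMap ^ (p - 1 + 1) by congr 1; omega]
    rw [pow_succ, Module.End.mul_apply, e]
    conv_lhs => rw [hwx]
    rw [map_add, map_smul, h3, h4]
    simp

lemma Setup.pc_two [Fact p.Prime] [CharP k p] (S : Setup k p A x ε δ) {a b : k} (ha : a ≠ 0)
    (hb : b ^ (p - 1) = -a) : PC p a (b • (x • δ)) := by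
  have hpp : p.Prime := Fact.out
  have hp2 := hpp.two_le
  have := S.nontriv
  have hb0 : b ≠ 0 := by
    rintro rfl
    rw [zero_pow (by omega)] at hb
    exact ha (by simpa using hb.symm)
  set w := b • (x • δ) with hw
  have hwx : w x = b • x := by simp [hw, S.del]
  have e : ∀ f, (w.toLinearMap : Module.End k A) f = w f := fun _ => rfl
  refine S.pc_of_x ?_ ?_
  · intro h
    have h2 := congrArg (fun f => ε (δ f)) hwx
    rw [h] at h2
    simp [S.del] at h2
    exact hb0 h2.symm
  · have h1 : ∀ j : ℕ, (w.toLinearMap ^ j : Module.End k A) x = b ^ j • x := by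
      intro j
      induction j with
      | zero => simp
      | succ j ih => rw [pow_succ', Module.End.mul_apply, ih, map_smul, e, hwx, smul_smul, pow_succ]
    rw [h1, hwx, smul_smul, ← hb, ← pow_succ]
    congr 2
    omega

lemma Setup.main [IsAlgClosed k] [Fact p.Prime] [CharP k p] (S : Setup k p A x ε δ) (hp : 3 < p)
    {a : k} (ha : a ≠ 0) (w : Derivation k A A) :
    PC p a w ↔ (∃ σ : Derivation k A A ≃ₗ⁅k⁆ Derivation k A A,
        σ (δ + a • (x ^ (p - 1) • δ)) = w) ∨
      ∃ b : k, b ^ (p - 1) = -a ∧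
        ∃ σ : Derivation k A A ≃ₗ⁅k⁆ Derivation k A A, σ (b • (x • δ)) = w := by
  constructor
  · intro hw
    by_cases h0 : ε (w x) = 0
    · exact Or.inr (S.case_two ha hw h0)
    · left
      obtain ⟨b, hb⟩ := IsAlgClosed.exists_pow_nat_eq (-a) (show 0 < p - 1 by omega)
      obtain ⟨σ, hσ⟩ := S.case_one ha hw hb h0
      obtain ⟨τ, hτ⟩ := S.case_one ha (S.pc_one hp a) hb (by
        have h3 : p - 1 ≠ 0 := by omega
        simp [S.del, S.eps_x, h3])
      refine ⟨τ.symm.trans σ, ?_⟩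
      rw [← hτ, LieEquiv.trans_apply, LieEquiv.symm_apply_apply, hσ]
  · rintro (⟨σ, rfl⟩ | ⟨b, hb, σ, rfl⟩)
    · exact S.pc_map (S.pc_one hp a) σ
    · exact S.pc_map (S.pc_two ha hb) σ

end General

lemma trunc_setup (k : Type*) [Field k] (p : ℕ) (hp : 3 < p) (δ : Witt k p)
    (hδ : δ (xgen k p) = 1) :
    ∃ ε : TruncPoly k p →ₐ[k] k, Setup k p (TruncPoly k p) (xgen k p) ε δ := by
  have hx : ∀ q : k[X], Ideal.Quotient.mk (Ideal.span {(X : k[X]) ^ p}) q = aeval (xgen k p) q := by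
    intro q
    have : (Ideal.Quotient.mkₐ k (Ideal.span {(X : k[X]) ^ p})) = aeval (xgen k p) := by
      ext; simp [xgen]
    exact congrArg (fun f => f q) this
  have hlift : ∀ {B : Type _} [CommRing B] [Algebra k B] (y : B), y ^ p = 0 →
      ∃ φ : TruncPoly k p →ₐ[k] B, φ (xgen k p) = y := by
    intro B _ _ y hy
    refine ⟨Ideal.Quotient.liftₐ _ (aeval y) ?_, ?_⟩
    · intro q hq
      rw [Ideal.mem_span_singleton] at hq
      obtain ⟨r, rfl⟩ := hq
      simp [hy]
    · exact (Ideal.Quotient.lift_mk _ _ _).trans (aeval_X y)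
  have hxp : xgen k p ^ p = 0 := by
    rw [xgen, ← map_pow, Ideal.Quotient.eq_zero_iff_mem]
    exact Ideal.mem_span_singleton_self _
  obtain ⟨ε, hε⟩ := hlift (0 : k) (zero_pow (by omega))
  refine ⟨ε, ⟨hε, hxp, ?_, ?_, hδ, ?_, ?_, fun y hy => hlift y hy⟩⟩
  · rw [xgen, ← map_pow, Ne, Ideal.Quotient.eq_zero_iff_mem, Ideal.mem_span_singleton,
      pow_dvd_pow_iff X_ne_zero not_isUnit_X]
    omega
  · intro h hh
    obtain ⟨q, rfl⟩ := Ideal.Quotient.mk_surjective h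
    have h1 : ε (Ideal.Quotient.mk (Ideal.span {(X : k[X]) ^ p}) q) = q.coeff 0 := by
      rw [hx, ← aeval_algHom_apply, hε, ← coeff_zero_eq_aeval_zero]
    rw [h1] at hh
    obtain ⟨r, rfl⟩ := X_dvd_iff.mpr hh
    exact ⟨Ideal.Quotient.mk _ r, by rw [map_mul]; rfl⟩
  · intro w
    ext f
    obtain ⟨q, rfl⟩ := Ideal.Quotient.mk_surjective f
    rw [hx, Derivation.smul_apply, Derivation.comp_aeval_eq, Derivation.comp_aeval_eq, hδ]
    simp [mul_comm]
  · exact Polynomial.Monic.finite_quotient (monic_X_pow p)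


/-- for `a ≠ 0`, the set `W(-a) = {w ≠ 0 : w^p = -a·w}` (powers as
endomorphisms of `A`) equals the union of the `G`-orbit of `e₋₁ + a·e_(p-2)` and the
`G`-orbits of `b·e₀` over all `b` with `b^(p-1) = -a`. -/
theorem witt_Wminus_a_orbit_decomposition
    (k : Type*) [Field k] [IsAlgClosed k] (p : ℕ) [Fact p.Prime] [CharP k p]
    (hp : 3 < p)
    (δ : Witt k p) (hδ : δ (xgen k p) = 1)
    (E : ℕ → Witt k p) (hE : ∀ n, E n = (xgen k p) ^ n • δ)
    (a : k) (ha : a ≠ 0) :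
    {w : Witt k p | w ≠ 0 ∧
        (w.toLinearMap : Module.End k (TruncPoly k p)) ^ p
          = (-a) • (w.toLinearMap : Module.End k (TruncPoly k p))}
      = {w : Witt k p | ∃ σ : Witt k p ≃ₗ⁅k⁆ Witt k p, σ (E 0 + a • E (p - 1)) = w}
        ∪ ⋃ b ∈ {b : k | b ^ (p - 1) = -a},
            {w : Witt k p | ∃ σ : Witt k p ≃ₗ⁅k⁆ Witt k p, σ (b • E 1) = w} := by
  obtain ⟨ε, S⟩ := trunc_setup k p hp δ hδ
  ext w
  have h := S.main hp ha w
  have h0 : E 0 = δ := by rw [hE, pow_zero, one_smul]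
  have h1 : E 1 = xgen k p • δ := by rw [hE, pow_one]
  rw [h0, h1, hE (p - 1)]
  simp only [Set.mem_union, Set.mem_iUnion, Set.mem_ofPred_eq, exists_prop]
  exact h
end
end
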